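/- Let V be a congruence distributive variety. Then for every n ≥ 2 the n-commutator is neutral in V: for every A ∈ V and all congruences α₁,…,αₙ of A, [α₁,…,αₙ] = α₁∧⋯∧αₙ. -/

import Mathlib

set_option autoImplicit false

namespace UA

/-- A signature: a type of operation symbols, each with a finite arity. -/
structure Signature : Type 1 where
  ops : Type
  arity : ops → ℕ

/-- An algebra for a signature: a carrier set together with an interpretation
of every operation symbol. -/
structure Algebra (σ : Signature) : Type 1 where
  carrier : Type
  interp : (o : σ.ops) → (Fin (σ.arity o) → carrier) → carrier

variable {σ : Signature}

/-- A congruence of an algebra: an equivalence relation compatible with all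
basic operations. -/
structure Con (A : Algebra σ) : Type where
  r : A.carrier → A.carrier → Prop
  refl : ∀ a, r a a
  symm : ∀ {a b}, r a b → r b a
  trans : ∀ {a b c}, r a b → r b c → r a c
  compat : ∀ (o : σ.ops) (x y : Fin (σ.arity o) → A.carrier),
      (∀ i, r (x i) (y i)) → r (A.interp o x) (A.interp o y)

namespace Con

variable {A : Algebra σ}

instance : LE (Con A) := ⟨fun c d => ∀ a b : A.carrier, c.r a b → d.r a b⟩
instance : LT (Con A) := ⟨fun c d => c ≤ d ∧ ¬ d ≤ c⟩

/-- The total congruence `1_A`. -/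
def top : Con A where
  r := fun _ _ => True
  refl := fun _ => trivial
  symm := fun _ => trivial
  trans := fun _ _ => trivial
  compat := fun _ _ _ _ => trivial

/-- The identity congruence `0_A`. -/
def bot : Con A where
  r := fun a b => a = b
  refl := fun _ => rfl
  symm := fun h => h.symm
  trans := fun h h' => h.trans h'
  compat := fun o _ _ h => congrArg (A.interp o) (funext h)

/-- Meet of an arbitrary family of congruences (intersection). -/
def sInf (S : Set (Con A)) : Con A where
  r a b := ∀ c ∈ S, c.r a b
  refl a c _ := c.refl a
  symm h c hc := c.symm (h c hc)
  trans h h' c hc := c.trans (h c hc) (h' c hc)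
  compat o x y h c hc := c.compat o x y (fun i => h i c hc)

/-- Binary meet of congruences. -/
def inf (c d : Con A) : Con A where
  r a b := c.r a b ∧ d.r a b
  refl a := ⟨c.refl a, d.refl a⟩
  symm h := ⟨c.symm h.1, d.symm h.2⟩
  trans h h' := ⟨c.trans h.1 h'.1, d.trans h.2 h'.2⟩
  compat o x y h := ⟨c.compat o x y fun i => (h i).1, d.compat o x y fun i => (h i).2⟩

/-- The congruence generated by a set of pairs. -/
def conGen (S : Set (A.carrier × A.carrier)) : Con A :=
  sInf {c : Con A | ∀ p ∈ S, c.r p.1 p.2}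

/-- Binary join of congruences. -/
def sup (c d : Con A) : Con A := conGen {p | c.r p.1 p.2 ∨ d.r p.1 p.2}

/-- Join of a family of congruences. -/
def iSup {I : Type} (f : I → Con A) : Con A := conGen {p | ∃ i, (f i).r p.1 p.2}

/-- Composition of congruences as binary relations. -/
def comp (c d : Con A) (a b : A.carrier) : Prop := ∃ x, c.r a x ∧ d.r x b

/-- `d` covers `c` in the congruence lattice. -/
def Covers (c d : Con A) : Prop := c < d ∧ ∀ e : Con A, c < e → e ≤ d → e = d

theorem le_sup_right {c d : Con A} : d ≤ sup c d :=
  fun a b h e he => he (a, b) (Or.inr h)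

def toSetoid (c : Con A) : Setoid A.carrier := ⟨c.r, ⟨c.refl, c.symm, c.trans⟩⟩

end Con

/-- The quotient algebra `A/γ`. -/
noncomputable def quotAlg (A : Algebra σ) (γ : Con A) : Algebra σ where
  carrier := Quotient γ.toSetoid
  interp o x := Quotient.mk γ.toSetoid (A.interp o (fun i => (x i).out))

/-- The quotient congruence `α/γ` for `γ ≤ α`. -/
noncomputable def Con.quot {A : Algebra σ} (α γ : Con A) (h : γ ≤ α) : Con (quotAlg A γ) where
  r x y := Quotient.liftOn₂ x y (fun a b => α.r a b)
    (fun a b a' b' ha hb => propext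
      ⟨fun hr => α.trans (α.symm (h _ _ ha)) (α.trans hr (h _ _ hb)),
       fun hr => α.trans (h _ _ ha) (α.trans hr (α.symm (h _ _ hb)))⟩)
  refl x := Quotient.inductionOn x fun a => α.refl a
  symm {x y} h' := Quotient.inductionOn₂ x y (fun _ _ hab => α.symm hab) h'
  trans {x y z} h1 h2 :=
    Quotient.inductionOn₃ x y z (fun _ _ _ hab hbc => α.trans hab hbc) h1 h2
  compat o x y hxy := by
    show α.r (A.interp o fun i => (x i).out) (A.interp o fun i => (y i).out)
    refine α.compat o _ _ fun i => ?_
    have h1 := hxy i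
    rw [← Quotient.out_eq (x i), ← Quotient.out_eq (y i)] at h1
    exact h1

/-- The polynomial operations of an algebra: the clone generated by the basic
operations, the projections and the constants. -/
inductive IsPolynomial (A : Algebra σ) : {n : ℕ} → ((Fin n → A.carrier) → A.carrier) → Prop
  | proj {n : ℕ} (i : Fin n) : IsPolynomial A (fun x => x i)
  | const {n : ℕ} (a : A.carrier) : IsPolynomial A (fun _ : Fin n → A.carrier => a)
  | app {n : ℕ} (o : σ.ops) (g : Fin (σ.arity o) → (Fin n → A.carrier) → A.carrier) :
      (∀ j, IsPolynomial A (g j)) → IsPolynomial A (fun x => A.interp o (fun j => g j x))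

/-- Substituting, coordinatewise according to the grouping `g` and the choice
vector `ε`, the entries of `b` (where `ε` is `true`) or of `a` (where `ε` is `false`). -/
def chooseVec {β : Type} {N n : ℕ} (g : Fin N → Fin n) (a b : Fin N → β)
    (ε : Fin n → Bool) : Fin N → β :=
  fun i => if ε (g i) then b i else a i

/-- The higher centralizer relation `C(α₁,…,αₙ,β;δ)` of Bulatov.  Polynomials with
grouped variables are modelled by a polynomial `p` of arity `N` together with a
grouping map `g : Fin N → Fin (n+1)`; the group `Fin.last n` is the `β`-group. -/
def Centralizes {A : Algebra σ} {n : ℕ} (α : Fin n → Con A) (β δ : Con A) : Prop :=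
  ∀ (N : ℕ) (p : (Fin N → A.carrier) → A.carrier), IsPolynomial A p →
    ∀ (g : Fin N → Fin (n + 1)) (a b : Fin N → A.carrier),
      (∀ i, (Fin.lastCases (motive := fun _ => Con A) β α (g i)).r (a i) (b i)) →
      (∀ ε : Fin n → Bool, ε ≠ (fun _ => true) →
        δ.r (p (chooseVec g a b (Fin.lastCases (motive := fun _ => Bool) false ε)))
            (p (chooseVec g a b (Fin.lastCases (motive := fun _ => Bool) true ε)))) →
      δ.r (p (chooseVec g a b (Fin.lastCases (motive := fun _ => Bool) false fun _ => true)))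
          (p (chooseVec g a b (Fin.lastCases (motive := fun _ => Bool) true fun _ => true)))

/-- The higher commutator `[α₁,…,αₙ,β]`: the smallest congruence `δ` such that
`C(α₁,…,αₙ,β;δ)` holds. -/
def commutator {A : Algebra σ} {n : ℕ} (α : Fin n → Con A) (β : Con A) : Con A :=
  Con.sInf {δ : Con A | Centralizes α β δ}

/-- The higher commutator of a nonempty list of congruences, with the convention
`[α] = α` for a single congruence. -/
def commList {A : Algebra σ} : {n : ℕ} → (Fin (n + 1) → Con A) → Con A
  | 0, γ => γ 0
  | (n+1), γ => commutator (fun j : Fin (n+1) => γ j.castSucc) (γ (Fin.last (n+1)))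

/-- The `m`-fold commutator `[θ,…,θ]_m` (for `m ≥ 1`). -/
def nfold {A : Algebra σ} (θ : Con A) (m : ℕ) : Con A :=
  commList (fun _ : Fin (m - 1 + 1) => θ)

/-- The binary commutator `[c,d]`. -/
def binComm {A : Algebra σ} (c d : Con A) : Con A := commutator (fun _ : Fin 1 => c) d

/-- The lower central series `(θ]ⁿ`. -/
def lcs {A : Algebra σ} (θ : Con A) : ℕ → Con A
  | 0 => θ
  | (k+1) => binComm θ (lcs θ k)

/-- The derived series `[θ]ⁿ`. -/
def derived {A : Algebra σ} (θ : Con A) : ℕ → Con A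
  | 0 => θ
  | (k+1) => binComm (derived θ k) (derived θ k)

/-- An algebra is nilpotent if some term of the lower central series of `1_A` is `0_A`. -/
def Nilpotent (A : Algebra σ) : Prop := ∃ m, lcs (Con.top : Con A) m = Con.bot

/-- An algebra is nilpotent of class `n` if `(1_A]ⁿ = 0_A`. -/
def NilpotentOfClass (A : Algebra σ) (n : ℕ) : Prop := lcs (Con.top : Con A) n = Con.bot

/-- A congruence is solvable if some term of its derived series is `0_A`. -/
def SolvableCon {A : Algebra σ} (θ : Con A) : Prop := ∃ m, derived θ m = Con.bot

/-- `A` is `n`-supernilpotent if `[1_A,…,1_A]_n = 0_A`. -/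
def Supernilpotent (A : Algebra σ) (n : ℕ) : Prop := nfold (Con.top : Con A) n = Con.bot

/-- A polynomial `f` absorbs the tuple `a` to the element `c`. -/
def Absorbs (A : Algebra σ) {k : ℕ} (f : (Fin k → A.carrier) → A.carrier)
    (a : Fin k → A.carrier) (c : A.carrier) : Prop :=
  ∀ b : Fin k → A.carrier, (∃ i, b i = a i) → f b = c

/-- Terms over a signature with variables in `X`. -/
inductive Term (σ : Signature) (X : Type) : Type
  | var : X → Term σ X
  | app : (o : σ.ops) → (Fin (σ.arity o) → Term σ X) → Term σ X

/-- Evaluation of a term in an algebra under an assignment of the variables. -/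
def Term.eval {X : Type} (A : Algebra σ) (v : X → A.carrier) : Term σ X → A.carrier
  | Term.var x => v x
  | Term.app o t => A.interp o fun i => Term.eval A v (t i)

/-- Substitution of terms into a term. -/
def Term.subst {X Y : Type} : Term σ X → (X → Term σ Y) → Term σ Y
  | Term.var x, s => s x
  | Term.app o t, s => Term.app o fun i => Term.subst (t i) s

/-- `A` possesses a Mal'cev term. -/
def HasMalcevTerm (A : Algebra σ) : Prop :=
  ∃ t : Term σ (Fin 3), ∀ a b : A.carrier,
    t.eval A ![a, b, b] = a ∧ t.eval A ![b, b, a] = a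

/-- A class of algebras is a variety when it is the class of all models of a set
of identities. -/
def IsVariety (V : Algebra σ → Prop) : Prop :=
  ∃ E : Set (Term σ ℕ × Term σ ℕ),
    ∀ A : Algebra σ, V A ↔ ∀ e ∈ E, ∀ v : ℕ → A.carrier, e.1.eval A v = e.2.eval A v

/-- Two terms are `V`-equivalent when they evaluate equally in every member of `V`. -/
def vSetoid (V : Algebra σ → Prop) (X : Type) : Setoid (Term σ X) where
  r t s := ∀ A : Algebra σ, V A → ∀ v : X → A.carrier, t.eval A v = s.eval A v
  iseqv := ⟨fun _ _ _ _ => rfl, fun h A hA v => (h A hA v).symm,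
    fun h h' A hA v => (h A hA v).trans (h' A hA v)⟩

/-- The `V`-free algebra on the set `X` of generators. -/
noncomputable def freeAlg (V : Algebra σ → Prop) (X : Type) : Algebra σ where
  carrier := Quotient (vSetoid V X)
  interp o x := Quotient.mk (vSetoid V X) (Term.app o fun i => (x i).out)

/-- The principal congruence `θ(a,b)` generated by the pair `(a,b)`. -/
def conPair (A : Algebra σ) (a b : A.carrier) : Con A := Con.conGen {(a, b)}

/-- A weak difference term for the class `V`. -/
def IsWeakDiffTerm (V : Algebra σ → Prop) (c : Term σ (Fin 3)) : Prop :=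
  ∀ A : Algebra σ, V A → ∀ a b : A.carrier,
    (binComm (conPair A a b) (conPair A a b)).r (c.eval A ![a, b, b]) a ∧
    (binComm (conPair A a b) (conPair A a b)).r a (c.eval A ![b, b, a])

/-- A weak `n`-difference term for the class `V`. -/
def IsWeakNDiffTerm (V : Algebra σ → Prop) (n : ℕ) (c : Term σ (Fin 3)) : Prop :=
  ∀ A : Algebra σ, V A → ∀ a b : A.carrier,
    (nfold (conPair A a b) n).r (c.eval A ![a, b, b]) a ∧
    (nfold (conPair A a b) n).r a (c.eval A ![b, b, a])

/-- Order-preserving maps on the congruence lattice. -/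
def MonotoneCon {A : Algebra σ} (F : Con A → Con A) : Prop :=
  ∀ c d : Con A, c ≤ d → F c ≤ F d

/-- `p` is a weak `f`-term of `A` with respect to the interpretation `F`. -/
def IsWeakFTerm (A : Algebra σ) (F : Con A → Con A) (p : Term σ (Fin 3)) : Prop :=
  ∀ (θ : Con A) (a b : A.carrier), θ.r a b →
    (F θ).r (p.eval A ![a, b, b]) a ∧ (F θ).r a (p.eval A ![b, b, a])

/-- `p` is a weak `f`-term for the class `V`. -/
def HasWeakFTermVariety (V : Algebra σ → Prop) (p : Term σ (Fin 3)) : Prop :=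
  ∀ A : Algebra σ, V A → ∃ F : Con A → Con A, MonotoneCon F ∧ IsWeakFTerm A F p

/-- The set `T^θ_{n,f}(θ₁,…,θₙ)` of pairs coming from polynomials which
`f(θ)`-absorb on the cube `{ā₁,b̄₁}×⋯×{āₙ,b̄ₙ}`. -/
def TSet (A : Algebra σ) (F : Con A → Con A) (θ : Con A) {n : ℕ} (θs : Fin n → Con A) :
    Set (A.carrier × A.carrier) :=
  {pr | ∃ (N : ℕ) (g : (Fin N → A.carrier) → A.carrier), IsPolynomial A g ∧
    ∃ (gr : Fin N → Fin n) (a b : Fin N → A.carrier),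
      (∀ i, (θs (gr i)).r (a i) (b i)) ∧
      (∀ ε : Fin n → Bool, (∃ j, ε j = false) →
        (F θ).r (g (fun i => if ε (gr i) then b i else a i)) (g a)) ∧
      pr = (g b, g a)}

/-- Homomorphisms of algebras. -/
def IsHom (A B : Algebra σ) (h : A.carrier → B.carrier) : Prop :=
  ∀ (o : σ.ops) (x : Fin (σ.arity o) → A.carrier),
    h (A.interp o x) = B.interp o (fun i => h (x i))

/-- The product of a family of algebras. -/
def prodAlg {I : Type} (As : I → Algebra σ) : Algebra σ where
  carrier := ∀ i, (As i).carrier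
  interp o x i := (As i).interp o (fun j => x j i)

/-- The subuniverse generated by a subset. -/
inductive Gen (A : Algebra σ) (S : Set A.carrier) : A.carrier → Prop
  | base {a : A.carrier} : a ∈ S → Gen A S a
  | app (o : σ.ops) (x : Fin (σ.arity o) → A.carrier) :
      (∀ i, Gen A S (x i)) → Gen A S (A.interp o x)

/-- `A` possesses a Taylor term. -/
def HasTaylorTerm (A : Algebra σ) : Prop :=
  ∃ (n : ℕ) (t : Term σ (Fin n)), 1 ≤ n ∧
    (∀ a : A.carrier, t.eval A (fun _ => a) = a) ∧
    ∀ i : Fin n, ∃ u v : Fin n → Bool, u i = true ∧ v i = false ∧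
      ∀ x y : A.carrier,
        t.eval A (fun j => if u j then x else y) = t.eval A (fun j => if v j then x else y)

/-- The variety `V` possesses a Taylor term. -/
def VarietyHasTaylorTerm (V : Algebra σ → Prop) : Prop :=
  ∃ (n : ℕ) (t : Term σ (Fin n)), 1 ≤ n ∧
    (∀ A : Algebra σ, V A → ∀ a : A.carrier, t.eval A (fun _ => a) = a) ∧
    ∀ i : Fin n, ∃ u v : Fin n → Bool, u i = true ∧ v i = false ∧
      ∀ A : Algebra σ, V A → ∀ x y : A.carrier,
        t.eval A (fun j => if u j then x else y) = t.eval A (fun j => if v j then x else y)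

/-- `Ξ(θ)`: the smallest set of congruences containing `θ` and closed under
higher commutators (of arity at least 2) of its members. -/
inductive Xi {A : Algebra σ} (θ : Con A) : Con A → Prop
  | base : Xi θ θ
  | comm {k : ℕ} (γ : Fin (k + 2) → Con A) : (∀ j, Xi θ (γ j)) → Xi θ (commList γ)

/-- An expanded loop on the carrier `α` with extra operations indexed by `ι`. -/
structure ExpLoop (ι : Type) (ar : ι → ℕ) (α : Type) : Type where
  mul : α → α → α
  ldiv : α → α → α
  rdiv : α → α → α
  zero : α
  extra : (i : ι) → (Fin (ar i) → α) → α
  ldiv_mul : ∀ x y, ldiv x (mul x y) = y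
  mul_rdiv : ∀ x y, rdiv (mul x y) y = x
  mul_ldiv : ∀ x y, mul x (ldiv x y) = y
  rdiv_mul : ∀ x y, mul (rdiv x y) y = x
  zero_mul : ∀ x, mul zero x = x
  mul_zero : ∀ x, mul x zero = x

/-- Operation symbols of an expanded loop. -/
inductive LoopOp (ι : Type) : Type
  | mul | ldiv | rdiv | zero
  | extra : ι → LoopOp ι

/-- The signature of an expanded loop. -/
@[reducible] def loopSig (ι : Type) (ar : ι → ℕ) : Signature where
  ops := LoopOp ι
  arity o := match o with
    | .mul => 2
    | .ldiv => 2
    | .rdiv => 2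
    | .zero => 0
    | .extra i => ar i

/-- The algebra underlying an expanded loop. -/
def ExpLoop.toAlgebra {ι : Type} {ar : ι → ℕ} {α : Type} (L : ExpLoop ι ar α) :
    Algebra (loopSig ι ar) where
  carrier := α
  interp o := match o with
    | .mul => fun x => L.mul (x 0) (x 1)
    | .ldiv => fun x => L.ldiv (x 0) (x 1)
    | .rdiv => fun x => L.rdiv (x 0) (x 1)
    | .zero => fun _ => L.zero
    | .extra i => L.extra i

/-- An expanded loop is of `n`-type. -/
def ExpLoop.IsNType {ι : Type} {ar : ι → ℕ} {α : Type} (L : ExpLoop ι ar α) (n : ℕ) : Prop :=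
  (∀ p : Σ k : ℕ, (Fin k → α) → α,
      (∃ i : ι, p = ⟨ar i, L.extra i⟩) ↔
        (1 ≤ p.1 ∧ p.1 ≤ n - 1 ∧ IsPolynomial L.toAlgebra p.2 ∧
          Absorbs L.toAlgebra p.2 (fun _ => L.zero) L.zero)) ∧
  (∀ f : (Fin (n - 1) → α) → α,
      IsPolynomial L.toAlgebra f → Absorbs L.toAlgebra f (fun _ => L.zero) L.zero →
      ∀ (j : Fin (n - 1)) (x : Fin (n - 1) → α) (u v : α),
        f (Function.update x j (L.mul u v)) =
          L.mul (f (Function.update x j u)) (f (Function.update x j v))) ∧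
  (∀ k : ℕ, 2 ≤ k → k < n →
      commList (Fin.snoc (fun _ : Fin (n - k) => (Con.top : Con L.toAlgebra))
        (nfold Con.top k)) = Con.bot)

/-- `A` is polynomially equivalent to an `n`-type expanded loop on the same carrier. -/
def PolyEquivNTypeLoop (A : Algebra σ) (n : ℕ) : Prop :=
  ∃ (ι : Type) (ar : ι → ℕ) (L : ExpLoop ι ar A.carrier),
    L.IsNType n ∧
    ∀ (k : ℕ) (f : (Fin k → A.carrier) → A.carrier),
      IsPolynomial A f ↔ IsPolynomial L.toAlgebra f

/-- Left-associated product of a list with initial value `c`. -/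
def lprodFrom {β : Type} (mul : β → β → β) (c : β) (l : List β) : β := List.foldl mul c l

/-- Left-associated product of a list (with a default value for the empty list). -/
def lprodList {β : Type} (mul : β → β → β) (dflt : β) : List β → β
  | [] => dflt
  | a :: l => List.foldl mul a l

/-- Left-associated product of a nonempty tuple. -/
def lassoc {β : Type} (mul : β → β → β) : {m : ℕ} → (Fin (m + 1) → β) → β
  | 0, y => y 0
  | (m+1), y => mul (lassoc mul (Fin.init y)) (y (Fin.last (m+1)))

/-- `A` has a representation of degree `n`. -/
def HasRepOfDegree (A : Algebra σ) (n : ℕ) : Prop :=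
  ∃ (z : A.carrier) (r : (Fin 2 → A.carrier) → A.carrier),
    IsPolynomial A r ∧ (∀ x : A.carrier, r ![z, x] = x) ∧ (∀ x : A.carrier, r ![x, z] = x) ∧
    ∀ (k : ℕ) (f : (Fin k → A.carrier) → A.carrier), IsPolynomial A f →
      ∃ (c : A.carrier) (R : ℕ → (Fin k → A.carrier) → A.carrier),
        (∀ m : ℕ, 1 ≤ m → m ≤ min k n →
          ∃ (l : List (Finset (Fin k)))
            (t : (S : Finset (Fin k)) → (Fin S.card → A.carrier) → A.carrier),
            l.Nodup ∧
            (∀ S : Finset (Fin k), S ∈ l ↔ S.card = m) ∧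
            (∀ S ∈ l, IsPolynomial A (t S) ∧ Absorbs A (t S) (fun _ => z) z) ∧
            (∀ x : Fin k → A.carrier,
              R m x = lprodList (fun u v => r ![u, v]) z
                (l.map (fun S => t S (fun j => x ((S.orderIsoOfFin rfl j).val)))))) ∧
        ∀ x : Fin k → A.carrier,
          f x = lprodFrom (fun u v => r ![u, v]) c
            ((List.range' 1 (min k n)).map (fun m => R m x))

/-- Products of `0`-absorbing polynomials (of arities between `lo` and `hi`)
in a given set of variables. -/
inductive ProdOfAbs {ι : Type} {ar : ι → ℕ} {α : Type} (L : ExpLoop ι ar α)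
    (lo hi : ℕ) {I : Type} : ((I → α) → α) → Prop
  | base {p : ℕ} (h : (Fin p → α) → α) (sel : Fin p → I) :
      lo ≤ p → p ≤ hi → IsPolynomial L.toAlgebra h →
      Absorbs L.toAlgebra h (fun _ => L.zero) L.zero →
      ProdOfAbs L lo hi (fun v => h (fun j => v (sel j)))
  | mul {F G : (I → α) → α} :
      ProdOfAbs L lo hi F → ProdOfAbs L lo hi G →
      ProdOfAbs L lo hi (fun v => L.mul (F v) (G v))

/-- The terms `q_m` (for `m ≥ 2`, `qSeq q (m-2)` is `q_m`):
`q₂ := q`, `q_{m+1}(x,y,z) := q(x, q_m(x,y,y), q_m(x,y,z))`. -/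
def qSeq (q : Term σ (Fin 3)) : ℕ → Term σ (Fin 3)
  | 0 => q
  | (k+1) => q.subst ![Term.var 0, (qSeq q k).subst ![Term.var 0, Term.var 1, Term.var 1], qSeq q k]



/-! ### Auxiliary results -/

theorem Con.ext_r {A : Algebra σ} {c d : Con A} (h : ∀ a b, c.r a b ↔ d.r a b) : c = d := by
  have hr : c.r = d.r := funext fun a => funext fun b => propext (h a b)
  cases c; cases d; cases hr; rfl

theorem poly_compat {A : Algebra σ} (c : Con A) {N : ℕ} {p : (Fin N → A.carrier) → A.carrier}
    (hp : IsPolynomial A p) : ∀ x y : Fin N → A.carrier, (∀ i, c.r (x i) (y i)) →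
      c.r (p x) (p y) := by
  induction hp with
  | proj i => intro x y h; exact h i
  | const a => intro x y h; exact c.refl a
  | app o g _ ih => intro x y h; exact c.compat o _ _ fun j => ih j x y h

theorem eval_subst {X Y : Type} (A : Algebra σ) (v : Y → A.carrier) (s : X → Term σ Y)
    (t : Term σ X) : (t.subst s).eval A v = t.eval A (fun x => (s x).eval A v) := by
  induction t with
  | var x => rfl
  | app o t ih =>
    show A.interp o _ = A.interp o _
    exact congrArg _ (funext ih)

theorem out_eval {V : Algebra σ → Prop} {X : Type} (t : Term σ X) (A : Algebra σ) (hA : V A)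
    (v : X → A.carrier) :
    (Quotient.out (Quotient.mk (vSetoid V X) t)).eval A v = t.eval A v :=
  Quotient.exact (Quotient.out_eq (Quotient.mk (vSetoid V X) t)) A hA v

theorem free_eval (V : Algebra σ → Prop) {X Y : Type} (v : Y → (freeAlg V X).carrier)
    (t : Term σ Y) :
    t.eval (freeAlg V X) v = Quotient.mk (vSetoid V X) (t.subst fun y => Quotient.out (v y)) := by
  induction t with
  | var y => exact (Quotient.out_eq (v y)).symm
  | app o t ih =>
    have h : (fun i => (t i).eval (freeAlg V X) v) =
        fun i => Quotient.mk (vSetoid V X) ((t i).subst fun y => Quotient.out (v y)) := funext ih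
    show (freeAlg V X).interp o (fun i => (t i).eval (freeAlg V X) v) = _
    rw [h]
    refine Quotient.sound ?_
    intro A hA w
    show A.interp o _ = A.interp o _
    exact congrArg _ (funext fun i => out_eval _ A hA w)

theorem free_mem {V : Algebra σ → Prop} (hV : IsVariety V) (X : Type) : V (freeAlg V X) := by
  obtain ⟨E, hE⟩ := hV
  rw [hE]
  intro e he v
  rw [free_eval, free_eval]
  refine Quotient.sound ?_
  intro A hA w
  rw [eval_subst, eval_subst]
  exact (hE A).1 hA e he _

/-- Congruence of the free algebra on three generators identifying the generators `i` and `j`. -/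
noncomputable def kerCon (V : Algebra σ → Prop) (i j : Fin 3) : Con (freeAlg V (Fin 3)) where
  r p q := ∀ A : Algebra σ, V A → ∀ v : Fin 3 → A.carrier, v i = v j →
    Term.eval A v (Quotient.out p) = Term.eval A v (Quotient.out q)
  refl _ _ _ _ _ := rfl
  symm h A hA v hv := (h A hA v hv).symm
  trans h h' A hA v hv := (h A hA v hv).trans (h' A hA v hv)
  compat o x y h A hA v hv := by
    have e : ∀ x : Fin (σ.arity o) → (freeAlg V (Fin 3)).carrier,
        Term.eval A v (Quotient.out ((freeAlg V (Fin 3)).interp o x)) =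
          A.interp o (fun k => Term.eval A v (Quotient.out (x k))) :=
      fun x => out_eval _ A hA v
    rw [e, e]
    exact congrArg _ (funext fun k => h k A hA v hv)

theorem chain_compat {A : Algebra σ} {R : A.carrier → A.carrier → Prop}
    (hR : ∀ (o : σ.ops) (x : Fin (σ.arity o) → A.carrier) (i : Fin (σ.arity o)) (u w : A.carrier),
      R u w → R (A.interp o (Function.update x i u)) (A.interp o (Function.update x i w)))
    (o : σ.ops) (x y : Fin (σ.arity o) → A.carrier)
    (h : ∀ i, Relation.ReflTransGen R (x i) (y i)) :
    Relation.ReflTransGen R (A.interp o x) (A.interp o y) := by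
  have key : ∀ s : Finset (Fin (σ.arity o)),
      Relation.ReflTransGen R (A.interp o x) (A.interp o (fun i => if i ∈ s then y i else x i)) := by
    intro s
    induction s using Finset.induction_on with
    | empty => simpa using Relation.ReflTransGen.refl
    | insert k s hk ih =>
      refine ih.trans ?_
      have e1 : (fun i => if i ∈ s then y i else x i) =
          Function.update (fun i => if i ∈ s then y i else x i) k (x k) := by
        funext i
        by_cases hi : i = k
        · subst hi; simp [hk]
        · simp [Function.update, hi]
      have e2 : (fun i => if i ∈ insert k s then y i else x i) =
          Function.update (fun i => if i ∈ s then y i else x i) k (y k) := by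
        funext i
        by_cases hi : i = k
        · subst hi; simp
        · simp [Function.update, hi]
      rw [e2]
      nth_rewrite 1 [e1]
      exact Relation.ReflTransGen.lift
        (fun u => A.interp o (Function.update (fun i => if i ∈ s then y i else x i) k u))
        (fun u w huw => hR o _ k u w huw) _ _ (h k)
  simpa using key Finset.univ

theorem update_compat {A : Algebra σ} (c : Con A) (o : σ.ops) (x : Fin (σ.arity o) → A.carrier)
    (i : Fin (σ.arity o)) (u w : A.carrier) (h : c.r u w) :
    c.r (A.interp o (Function.update x i u)) (A.interp o (Function.update x i w)) := by
  refine c.compat o _ _ fun k => ?_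
  by_cases hk : k = i
  · subst hk; simpa using h
  · simpa [Function.update, hk] using c.refl _

theorem sup_chain {A : Algebra σ} (c d : Con A) (a b : A.carrier) (h : (Con.sup c d).r a b) :
    Relation.ReflTransGen (fun u w => c.r u w ∨ d.r u w) a b := by
  let e : Con A :=
    { r := Relation.ReflTransGen (fun u w => c.r u w ∨ d.r u w)
      refl := fun _ => Relation.ReflTransGen.refl
      symm := fun h => by
        induction h with
        | refl => exact Relation.ReflTransGen.refl
        | tail _ hs ih => exact Relation.ReflTransGen.head (hs.imp c.symm d.symm) ih
      trans := fun h h' => h.trans h'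
      compat := chain_compat fun o x i u w huw =>
        huw.imp (update_compat c o x i u w) (update_compat d o x i u w) }
  exact h e fun p hp => Relation.ReflTransGen.single hp

/-- The ternary terms `t` with `t(a,z,a) = a` for all `z`. -/
def AbsTerm (A : Algebra σ) (a : A.carrier) : Type :=
  {t : Term σ (Fin 3) // ∀ z, t.eval A ![a, z, a] = a}

theorem jonsson_chain {V : Algebra σ → Prop} (hV : IsVariety V)
    (hCD : ∀ A : Algebra σ, V A → ∀ α β γ : Con A,
      Con.inf α (Con.sup β γ) = Con.sup (Con.inf α β) (Con.inf α γ))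
    (A : Algebra σ) (hA : V A) (a b : A.carrier) :
    Relation.EqvGen (fun u w => ∃ t : AbsTerm A a,
      u = t.1.eval A ![a, a, b] ∧ w = t.1.eval A ![a, b, b]) a b := by
  set R : A.carrier → A.carrier → Prop := fun u w => ∃ t : AbsTerm A a,
      u = t.1.eval A ![a, a, b] ∧ w = t.1.eval A ![a, b, b] with hRdef
  let X : Fin 3 → (freeAlg V (Fin 3)).carrier := fun i => Quotient.mk (vSetoid V (Fin 3)) (Term.var i)
  have hX : ∀ i (B : Algebra σ), V B → ∀ v : Fin 3 → B.carrier,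
      Term.eval B v (Quotient.out (X i)) = v i := fun i B hB v => out_eval _ B hB v
  have hker : ∀ i j, (kerCon V i j).r (X i) (X j) := by
    intro i j B hB v hv
    rw [hX i B hB, hX j B hB, hv]
  have h1 : (Con.inf (kerCon V 0 2) (Con.sup (kerCon V 0 1) (kerCon V 1 2))).r (X 0) (X 2) :=
    ⟨hker 0 2, fun e he => e.trans (he (X 0, X 1) (Or.inl (hker 0 1)))
      (he (X 1, X 2) (Or.inr (hker 1 2)))⟩
  rw [hCD _ (free_mem hV _)] at h1
  have h2 := sup_chain _ _ _ _ h1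
  have h3 : ∀ q, Relation.ReflTransGen (fun u w =>
      (Con.inf (kerCon V 0 2) (kerCon V 0 1)).r u w ∨
      (Con.inf (kerCon V 0 2) (kerCon V 1 2)).r u w) (X 0) q →
      (kerCon V 0 2).r (X 0) q ∧
      Relation.EqvGen R a (Term.eval A ![a, a, b] (Quotient.out q)) ∧
      Relation.EqvGen R a (Term.eval A ![a, b, b] (Quotient.out q)) := by
    intro q hq
    induction hq with
    | refl =>
      refine ⟨(kerCon V 0 2).refl _, ?_, ?_⟩
      · rw [hX 0 A hA]; exact Relation.EqvGen.refl _
      · rw [hX 0 A hA]; exact Relation.EqvGen.refl _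
    | @tail q q' _ hs ih =>
      obtain ⟨i1, i2, i3⟩ := ih
      have j1 : (kerCon V 0 2).r (X 0) q' :=
        (kerCon V 0 2).trans i1 (hs.elim (fun h => h.1) (fun h => h.1))
      have hR : R (Term.eval A ![a, a, b] (Quotient.out q'))
          (Term.eval A ![a, b, b] (Quotient.out q')) := by
        refine ⟨⟨Quotient.out q', fun z => ?_⟩, rfl, rfl⟩
        rw [← j1 A hA ![a, z, a] rfl, hX 0 A hA]
        rfl
      refine ⟨j1, ?_⟩
      rcases hs with h | h
      · have e := h.2 A hA ![a, a, b] rfl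
        rw [e] at i2
        exact ⟨i2, i2.trans _ _ _ (Relation.EqvGen.rel _ _ hR)⟩
      · have e := h.2 A hA ![a, b, b] rfl
        rw [e] at i3
        exact ⟨i3.trans _ _ _ ((Relation.EqvGen.rel _ _ hR).symm _ _), i3⟩
  have h4 := (h3 _ h2).2.1
  rw [hX 2 A hA] at h4
  exact h4

theorem term_poly {A : Algebra σ} {N : ℕ} (t : Term σ (Fin 3))
    (f : (Fin N → A.carrier) → Fin 3 → A.carrier)
    (hf : ∀ i, IsPolynomial A (fun v => f v i)) :
    IsPolynomial A (fun v => t.eval A (f v)) := by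
  induction t with
  | var i => exact hf i
  | app o t ih => exact IsPolynomial.app o (fun j v => (t j).eval A (f v)) ih

/-- Nested evaluation of a list of terms. -/
def nest {A : Algebra σ} {a : A.carrier} {m : ℕ} (y : Fin m → A.carrier) :
    List (AbsTerm A a × Fin m) → A.carrier → A.carrier
  | [], x => x
  | (t, j) :: L, x => t.1.eval A ![a, nest y L x, y j]

theorem nest_append {A : Algebra σ} {a : A.carrier} {m : ℕ} (y : Fin m → A.carrier)
    (L : List (AbsTerm A a × Fin m)) (t : AbsTerm A a) (j : Fin m) (x : A.carrier) :
    nest y (L ++ [(t, j)]) x = nest y L (t.1.eval A ![a, x, y j]) := by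
  induction L with
  | nil => rfl
  | cons s L ih =>
    show s.1.1.eval A ![a, nest y (L ++ [(t, j)]) x, y s.2] = _
    rw [ih]; rfl

theorem nest_const {A : Algebra σ} {a : A.carrier} {m : ℕ} (y : Fin m → A.carrier)
    (L : List (AbsTerm A a × Fin m)) (j : Fin m) (hj : j ∈ L.map Prod.snd) (hy : y j = a)
    (x x' : A.carrier) : nest y L x = nest y L x' := by
  induction L with
  | nil => simp at hj
  | cons s L ih =>
    show s.1.1.eval A ![a, nest y L x, y s.2] = s.1.1.eval A ![a, nest y L x', y s.2]
    simp only [List.map_cons, List.mem_cons] at hj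
    rcases hj with h | h
    · rw [← h, hy, s.1.2, s.1.2]
    · rw [ih h]

theorem nest_poly {A : Algebra σ} {a : A.carrier} {m : ℕ} (L : List (AbsTerm A a × Fin m)) :
    IsPolynomial A (fun v : Fin (m + 1) → A.carrier =>
      nest (fun j : Fin m => v j.castSucc) L (v (Fin.last m))) := by
  induction L with
  | nil => exact IsPolynomial.proj _
  | cons s L ih =>
    refine term_poly s.1.1 (fun v => ![a, nest (fun j : Fin m => v j.castSucc) L (v (Fin.last m)),
      v s.2.castSucc]) fun i => ?_
    fin_cases i
    · exact IsPolynomial.const a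
    · exact ih
    · exact IsPolynomial.proj _

theorem nest_main {A : Algebra σ} {m : ℕ} (α : Fin m → Con A) (β δ : Con A)
    (hC : Centralizes α β δ) (a b : A.carrier) (hα : ∀ j, (α j).r a b) (hβ : β.r a b)
    (hJ : Relation.EqvGen (fun u w => ∃ t : AbsTerm A a,
      u = t.1.eval A ![a, a, b] ∧ w = t.1.eval A ![a, b, b]) a b)
    (R : List (Fin m)) : ∀ L : List (AbsTerm A a × Fin m),
      (∀ j, j ∈ R ∨ j ∈ L.map Prod.snd) →
      δ.r (nest (fun _ => b) L a) (nest (fun _ => b) L b) := by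
  induction R with
  | nil =>
    intro L hL
    have hL' : ∀ j, j ∈ L.map Prod.snd := fun j => (hL j).resolve_left (by simp)
    have h := hC (m + 1) _ (nest_poly L) id (fun _ => a) (fun _ => b) (by
      intro i
      refine Fin.lastCases ?_ (fun j => ?_) i
      · simpa using hβ
      · simpa using hα j) (by
      intro ε hε
      have : ∃ j, ε j = false := by
        by_contra hcon
        push Not at hcon
        exact hε (funext fun j => by simpa using hcon j)
      obtain ⟨j, hj⟩ := this
      simp only [chooseVec, id, Fin.lastCases_castSucc, Fin.lastCases_last]
      rw [nest_const _ L j (hL' j) (by simp [hj]) _ (if true = true then b else a)]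
      exact δ.refl _)
    simpa [chooseVec] using h
  | cons j R ih =>
    intro L hL
    have step : ∀ t : AbsTerm A a, δ.r (nest (fun _ => b) L (t.1.eval A ![a, a, b]))
        (nest (fun _ => b) L (t.1.eval A ![a, b, b])) := by
      intro t
      have := ih (L ++ [(t, j)]) (by
        intro k
        rcases hL k with h | h
        · rcases List.mem_cons.1 h with h | h
          · right; simp [h]
          · left; exact h
        · right; rw [List.map_append]; exact List.mem_append_left _ h)
      rwa [nest_append, nest_append] at this
    have gen : ∀ u w, Relation.EqvGen (fun u w => ∃ t : AbsTerm A a,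
        u = t.1.eval A ![a, a, b] ∧ w = t.1.eval A ![a, b, b]) u w →
        δ.r (nest (fun _ => b) L u) (nest (fun _ => b) L w) := by
      intro u w h
      induction h with
      | rel u w h => obtain ⟨t, rfl, rfl⟩ := h; exact step t
      | refl u => exact δ.refl _
      | symm u w _ ih => exact δ.symm ih
      | trans u w z _ _ i1 i2 => exact δ.trans i1 i2
    exact gen a b hJ

theorem centralizes_last {A : Algebra σ} {m : ℕ} (α : Fin m → Con A) (β : Con A) :
    Centralizes α β β := by
  intro N p hp g a b hab _
  refine poly_compat β hp _ _ fun i => ?_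
  have h := hab i
  simp only [chooseVec]
  generalize g i = k at h ⊢
  rcases Fin.eq_castSucc_or_eq_last k with ⟨j, rfl⟩ | rfl
  · simpa using β.refl _
  · simpa using h

theorem centralizes_left {A : Algebra σ} {m : ℕ} (α : Fin m → Con A) (β : Con A) (j : Fin m) :
    Centralizes α β (α j) := by
  intro N p hp g a b hab hε
  have key : ∀ c : Bool, (α j).r
      (p (chooseVec g a b (Fin.lastCases (motive := fun _ => Bool) c fun _ => true)))
      (p (chooseVec g a b (Fin.lastCases (motive := fun _ => Bool) c fun k => decide (k ≠ j)))) := by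
    intro c
    refine poly_compat _ hp _ _ fun i => ?_
    have h := hab i
    simp only [chooseVec]
    generalize g i = k' at h ⊢
    rcases Fin.eq_castSucc_or_eq_last k' with ⟨k, rfl⟩ | rfl
    · by_cases hk : k = j
      · subst hk
        simpa using (α k).symm (by simpa using h)
      · simpa [hk] using (α j).refl _
    · simpa using (α j).refl _
  have h := hε (fun k => decide (k ≠ j)) (fun hc => by simpa using congrFun hc j)
  exact (α j).trans (key false) ((α j).trans h ((α j).symm (key true)))

/-- Theorem 4.14 of "On Supernilpotent Algebras": in a congruence distributive
variety, every `n`-commutator (`n ≥ 2`) is neutral. -/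
theorem congruence_distributive_neutral {σ : Signature} (V : Algebra σ → Prop)
    (hV : IsVariety V)
    (hCD : ∀ A : Algebra σ, V A → ∀ α β γ : Con A,
      Con.inf α (Con.sup β γ) = Con.sup (Con.inf α β) (Con.inf α γ)) :
    ∀ n : ℕ, 2 ≤ n → ∀ A : Algebra σ, V A → ∀ α : Fin (n - 1 + 1) → Con A,
      commList α = Con.sInf (Set.range α) := by
  intro n hn A hA α
  obtain ⟨m, rfl⟩ : ∃ m, n = m + 2 := ⟨n - 2, by omega⟩
  refine Con.ext_r fun a b => ?_
  change (∀ δ ∈ {δ : Con A | Centralizes (fun j : Fin (m + 1) => α j.castSucc)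
    (α (Fin.last (m + 1))) δ}, δ.r a b) ↔ ∀ c ∈ Set.range α, c.r a b
  constructor
  · rintro h _ ⟨i, rfl⟩
    refine Fin.lastCases (motive := fun i : Fin (m + 1 + 1) => (α i).r a b) ?_ (fun j => ?_) i
    · exact h _ (centralizes_last _ _)
    · exact h _ (centralizes_left (fun j : Fin (m + 1) => α j.castSucc) _ j)
  · intro h δ hδ
    exact nest_main _ _ δ hδ a b (fun j => h _ ⟨_, rfl⟩) (h _ ⟨_, rfl⟩)
      (jonsson_chain hV hCD A hA a b) (List.finRange (m + 1)) []
      (fun j => Or.inl (List.mem_finRange j))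

end UA
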